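/- arXiv:1607.03995 — 6 statements merged into one kernel-verified Lean document; each statement's English description precedes it below -/
import Mathlib

section
/- Let n ≥ 1, 0 < R₂ < R₃ < R₁, λ, ν > 0, and let f : [R₂, R₁] → ℝ be continuous with f > 0 on [R₂, R₃), f(R₃) = 0, f < 0 on (R₃, R₁], ∫_{R₂}^{R₁} f(ρ)ρ^{n−1} dρ = 0, and ∫_{R₂}^{R₁} |f(ρ)|ρ^{n−1} dρ < 2λν R₂^{n−1}√(2λ)/(3√3). Define F(r) = −(1/rⁿ)·∫_{R₂}^{r} f(ρ)ρ^{n−1} dρ. Then 0 < F(r)²r² < 8λ³ν²/27 for every r ∈ (R₂, R₁). -/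
/-- Under the sign conditions on `f`, the balance condition, and the
smallness condition `∫_{R₂}^{R₁} |f(ρ)|ρ^{n-1} dρ < 2λν R₂^{n-1}√(2λ)/(3√3)`,
the profile `F(r) = -(1/rⁿ)·∫_{R₂}^{r} f(ρ)ρ^{n-1} dρ` satisfies
`0 < F(r)²r² < 8λ³ν²/27` for every `r ∈ (R₂, R₁)`. -/
theorem stmt_4 (n : ℕ) (hn : 1 ≤ n) (R₁ R₂ R₃ : ℝ)
    (hR₂ : 0 < R₂) (h₂₃ : R₂ < R₃) (h₃₁ : R₃ < R₁)
    (lam nu : ℝ) (hlam : 0 < lam) (hnu : 0 < nu)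
    (f : ℝ → ℝ) (hf : ContinuousOn f (Set.Icc R₂ R₁))
    (hpos : ∀ r ∈ Set.Ico R₂ R₃, 0 < f r)
    (hzero : f R₃ = 0)
    (hneg : ∀ r ∈ Set.Ioc R₃ R₁, f r < 0)
    (hbal : (∫ ρ in R₂..R₁, f ρ * ρ ^ (n - 1)) = 0)
    (hsmall : (∫ ρ in R₂..R₁, |f ρ| * ρ ^ (n - 1)) <
      2 * lam * nu * R₂ ^ (n - 1) * Real.sqrt (2 * lam) / (3 * Real.sqrt 3))
    (F : ℝ → ℝ)
    (hF : ∀ r, F r = -(1 / r ^ n) * ∫ ρ in R₂..r, f ρ * ρ ^ (n - 1)) :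
    ∀ r ∈ Set.Ioo R₂ R₁,
      0 < F r ^ 2 * r ^ 2 ∧ F r ^ 2 * r ^ 2 < 8 * lam ^ 3 * nu ^ 2 / 27 := by
  intro r hr
  obtain ⟨hr2, hr1⟩ := hr
  obtain ⟨m, rfl⟩ : ∃ m, n = m + 1 := ⟨n - 1, by omega⟩
  simp only [Nat.add_sub_cancel] at *
  have hr0 : 0 < r := hR₂.trans hr2
  have hg : ContinuousOn (fun ρ => f ρ * ρ ^ m) (Set.Icc R₂ R₁) :=
    hf.mul (continuous_pow m).continuousOn
  have hga : ContinuousOn (fun ρ => |f ρ| * ρ ^ m) (Set.Icc R₂ R₁) :=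
    hf.abs.mul (continuous_pow m).continuousOn
  have hi : ∀ (g : ℝ → ℝ), ContinuousOn g (Set.Icc R₂ R₁) → ∀ a b, R₂ ≤ a → a ≤ b → b ≤ R₁ →
      IntervalIntegrable g MeasureTheory.volume a b := by
    intro g hg a b ha hab hb
    apply ContinuousOn.intervalIntegrable
    rw [Set.uIcc_of_le hab]
    exact hg.mono (Set.Icc_subset_Icc ha hb)
  have hi1 := hi _ hg R₂ r le_rfl hr2.le hr1.le
  have hi2 := hi _ hg r R₁ hr2.le hr1.le le_rfl
  have hj1 := hi _ hga R₂ r le_rfl hr2.le hr1.le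
  have hj2 := hi _ hga r R₁ hr2.le hr1.le le_rfl
  have hGpos : 0 < ∫ ρ in R₂..r, f ρ * ρ ^ m := by
    rcases le_or_gt r R₃ with h | h
    · refine intervalIntegral.intervalIntegral_pos_of_pos_on hi1 ?_ hr2
      intro x hx
      exact mul_pos (hpos x ⟨hx.1.le, hx.2.trans_le h⟩) (pow_pos (hR₂.trans hx.1) m)
    · have h1 : 0 < ∫ ρ in r..R₁, -(f ρ * ρ ^ m) := by
        refine intervalIntegral.intervalIntegral_pos_of_pos_on hi2.neg ?_ hr1
        intro x hx
        have := mul_pos (neg_pos.2 (hneg x ⟨h.trans hx.1, hx.2.le⟩)) (pow_pos (hr0.trans hx.1) m)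
        simpa using this
      rw [intervalIntegral.integral_neg] at h1
      have h2 := intervalIntegral.integral_add_adjacent_intervals hi1 hi2
      linarith
  have hGle : (∫ ρ in R₂..r, f ρ * ρ ^ m) ≤ ∫ ρ in R₂..R₁, |f ρ| * ρ ^ m := by
    have h1 := intervalIntegral.integral_add_adjacent_intervals hj1 hj2
    have h2 : (∫ ρ in R₂..r, f ρ * ρ ^ m) ≤ ∫ ρ in R₂..r, |f ρ| * ρ ^ m := by
      refine intervalIntegral.integral_mono_on hr2.le hi1 hj1 ?_
      intro x hx
      exact mul_le_mul_of_nonneg_right (le_abs_self _) (pow_nonneg (hR₂.le.trans hx.1) m)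
    have h3 : 0 ≤ ∫ ρ in r..R₁, |f ρ| * ρ ^ m := by
      refine intervalIntegral.integral_nonneg hr1.le ?_
      intro x hx
      exact mul_nonneg (abs_nonneg _) (pow_nonneg (hr0.le.trans hx.1) m)
    linarith
  rw [hF r]
  generalize (∫ ρ in R₂..r, f ρ * ρ ^ m) = G at *
  have hrm : 0 < r ^ m := pow_pos hr0 m
  have heq : (-(1 / r ^ (m + 1)) * G) ^ 2 * r ^ 2 = (G / r ^ m) ^ 2 := by
    rw [pow_succ]
    field_simp
    ring
  have hC : (2 * lam * nu * Real.sqrt (2 * lam) / (3 * Real.sqrt 3)) ^ 2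
      = 8 * lam ^ 3 * nu ^ 2 / 27 := by
    rw [div_pow, mul_pow, mul_pow 3, Real.sq_sqrt (by positivity), Real.sq_sqrt (by positivity)]
    ring
  rw [heq, ← hC]
  have hq : 0 < G / r ^ m := div_pos hGpos hrm
  refine ⟨by positivity, pow_lt_pow_left₀ ?_ hq.le two_ne_zero⟩
  rw [div_lt_iff₀ hrm]
  have hpw : R₂ ^ m ≤ r ^ m := pow_le_pow_left₀ hR₂.le hr2.le m
  calc G < 2 * lam * nu * R₂ ^ m * Real.sqrt (2 * lam) / (3 * Real.sqrt 3) := hGle.trans_lt hsmall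
    _ = 2 * lam * nu * Real.sqrt (2 * lam) / (3 * Real.sqrt 3) * R₂ ^ m := by ring
    _ ≤ _ := mul_le_mul_of_nonneg_left hpw (by positivity)
end

section
/- Let λ, ν > 0, E(y) = 2y²(λ + y/ν), and let A ∈ (0, 8λ³ν²/27). Then the equation E(y) = A has exactly three real roots ζ₁, ζ₂, ζ₃, and they satisfy ζ₁ > 0 > ζ₂ > −2νλ/3 > ζ₃ > −νλ. -/
/-- For `λ, ν > 0`, `E y = 2y²(λ + y/ν)` and `A ∈ (0, 8λ³ν²/27)`,
the equation `E y = A` has exactly three real roots `ζ₁ > 0 > ζ₂ > -2νλ/3 > ζ₃ > -νλ`. -/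
theorem stmt_6 (lam nu : ℝ) (hlam : 0 < lam) (hnu : 0 < nu)
    (E : ℝ → ℝ) (hE : ∀ y, E y = 2 * y ^ 2 * (lam + y / nu))
    (A : ℝ) (hA : A ∈ Set.Ioo 0 (8 * lam ^ 3 * nu ^ 2 / 27)) :
    ∃ ζ₁ ζ₂ ζ₃ : ℝ,
      E ζ₁ = A ∧ E ζ₂ = A ∧ E ζ₃ = A ∧
      ζ₁ > 0 ∧ 0 > ζ₂ ∧ ζ₂ > -2 * nu * lam / 3 ∧
      -2 * nu * lam / 3 > ζ₃ ∧ ζ₃ > -nu * lam ∧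
      (∀ y : ℝ, E y = A → y = ζ₁ ∨ y = ζ₂ ∨ y = ζ₃) := by
  obtain ⟨hA0, hA1⟩ := hA
  have hp : 0 < nu * lam := mul_pos hnu hlam
  have hc : Continuous E := by
    have : E = fun y => 2 * y ^ 2 * (lam + y / nu) := funext hE
    rw [this]
    fun_prop
  have e0 : E 0 = 0 := by rw [hE]; ring
  have e1 : E (nu * lam) = 4 * lam ^ 3 * nu ^ 2 := by
    rw [hE]; field_simp; ring
  have e2 : E (-2 * nu * lam / 3) = 8 * lam ^ 3 * nu ^ 2 / 27 := by
    rw [hE]; field_simp; ring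
  have e3 : E (-nu * lam) = 0 := by
    rw [hE]; field_simp; ring
  have hq : 0 < lam ^ 3 * nu ^ 2 := by positivity
  obtain ⟨a, ⟨ha0, _⟩, ha⟩ := intermediate_value_Ioo hp.le hc.continuousOn
    (show A ∈ Set.Ioo (E 0) (E (nu * lam)) by
      rw [e0, e1]; exact ⟨hA0, by linarith⟩)
  obtain ⟨b, ⟨hb0, hb1⟩, hb⟩ := intermediate_value_Ioo'
    (show -2 * nu * lam / 3 ≤ 0 by linarith) hc.continuousOn
    (show A ∈ Set.Ioo (E 0) (E (-2 * nu * lam / 3)) by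
      rw [e0, e2]; exact ⟨hA0, hA1⟩)
  obtain ⟨c, ⟨hc0, hc1⟩, hcc⟩ := intermediate_value_Ioo
    (show -nu * lam ≤ -2 * nu * lam / 3 by linarith) hc.continuousOn
    (show A ∈ Set.Ioo (E (-nu * lam)) (E (-2 * nu * lam / 3)) by
      rw [e3, e2]; exact ⟨hA0, hA1⟩)
  refine ⟨a, b, c, ha, hb, hcc, ha0, hb1, hb0, hc1, hc0, ?_⟩
  have key : ∀ y, E y = A → 2 * y ^ 2 * (nu * lam + y) = nu * A := by
    intro y hy
    rw [← hy, hE]; field_simp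
  have quad : ∀ y, E y = A → y ≠ a → y ^ 2 + y * a + a ^ 2 + nu * lam * (y + a) = 0 := by
    intro y hy hne
    apply mul_left_cancel₀ (sub_ne_zero.mpr hne)
    linear_combination (key y hy - key a ha) / 2
  have lin : ∀ y, E y = A → y ≠ a → y ≠ b → y + b + a + nu * lam = 0 := by
    intro y hy hne hnb
    apply mul_left_cancel₀ (sub_ne_zero.mpr hnb)
    linear_combination quad y hy hne - quad b hb (by linarith : b < a).ne
  intro y hy
  by_cases h1 : y = a
  · exact Or.inl h1
  by_cases h2 : y = b
  · exact Or.inr (Or.inl h2)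
  have h3 := lin y hy h1 h2
  have h4 := lin c hcc (by linarith : c < a).ne (by linarith : c < b).ne
  exact Or.inr (Or.inr (by linarith))
end

section
/- Let λ, ν > 0, E(y) = 2y²(λ + y/ν), and let A > 8λ³ν²/27. Then the equation E(y) = A has exactly one real root, and this root is positive. -/
/-- For `λ, ν > 0`, `E y = 2y²(λ + y/ν)` and `A > 8λ³ν²/27`,
the equation `E y = A` has exactly one real root, and this root is positive. -/
theorem stmt_8 (lam nu : ℝ) (hlam : 0 < lam) (hnu : 0 < nu)
    (E : ℝ → ℝ) (hE : ∀ y, E y = 2 * y ^ 2 * (lam + y / nu))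
    (A : ℝ) (hA : 8 * lam ^ 3 * nu ^ 2 / 27 < A) :
    ∃ y : ℝ, E y = A ∧ 0 < y ∧ ∀ z : ℝ, E z = A → z = y := by
  have hA0 : 0 < A := lt_trans (by positivity) hA
  have hpos : ∀ z, E z = A → 0 < z := by
    intro z hz
    by_contra hneg
    have hzn : z / nu ≤ 0 := div_nonpos_of_nonpos_of_nonneg (not_lt.mp hneg) hnu.le
    have key : 8 * lam ^ 3 * nu ^ 2 / 27 - E z
        = 2 * nu ^ 2 * ((z / nu + 2 * lam / 3) ^ 2 * (lam / 3 - z / nu)) := by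
      rw [hE]
      field_simp
      ring
    have h1 : 0 ≤ lam / 3 - z / nu := by linarith
    have h2 : 0 ≤ 2 * nu ^ 2 * ((z / nu + 2 * lam / 3) ^ 2 * (lam / 3 - z / nu)) := by
      positivity
    linarith
  have hmono : ∀ a b, 0 < a → a < b → E a < E b := by
    intro a b ha hab
    rw [hE, hE]
    have hb : 0 < b := ha.trans hab
    gcongr
  have hcont : Continuous E := by
    have : E = fun y => 2 * y ^ 2 * (lam + y / nu) := funext hE
    rw [this]
    fun_prop
  set t : ℝ := 1 + A / (2 * nu ^ 2) with ht
  have ht1 : 1 ≤ t := by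
    have : 0 < A / (2 * nu ^ 2) := by positivity
    linarith
  have hM : A ≤ E (nu * t) := by
    have e1 : E (nu * t) = 2 * nu ^ 2 * (t ^ 2 * (lam + t)) := by
      rw [hE, mul_div_cancel_left₀ _ hnu.ne']
      ring
    have e2 : A = 2 * nu ^ 2 * (t - 1) := by
      rw [ht]
      field_simp
      ring
    rw [e1]
    refine e2.le.trans ?_
    have : t - 1 ≤ t ^ 2 * (lam + t) := by
      have h3 : 1 ≤ t ^ 2 := one_le_pow₀ ht1
      nlinarith
    gcongr
  have h0 : E 0 ≤ A := by
    rw [hE]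
    simpa using hA0.le
  obtain ⟨y, -, hy⟩ := intermediate_value_Icc (show (0 : ℝ) ≤ nu * t by positivity)
    hcont.continuousOn ⟨h0, hM⟩
  refine ⟨y, hy, hpos y hy, fun z hz => ?_⟩
  rcases lt_trichotomy z y with h | h | h
  · have := hmono z y (hpos z hz) h
    linarith
  · exact h
  · have := hmono y z (hpos y hy) h
    linarith
end

section
/- Let n ≥ 1, 0 < R₂ < R₁, λ, ν > 0, f : [R₂, R₁] → ℝ continuous with G(r) := ∫_{R₂}^{r} f(ρ)ρ^{n−1} dρ satisfying G(R₁) = 0. Define F(r) = −G(r)/rⁿ. Let ζ : [R₂, R₁] → ℝ be continuous with ζ(r) ≠ 0 and 2ζ(r)²(λ + ζ(r)/ν) = F(r)²r² for all r, and let u : [R₂, R₁] → ℝ be given by u(r) = C + ∫_{R₂}^{r} F(ρ)ρ/ζ(ρ) dρ. Then ∫_{R₂}^{R₁} [ (ν/2)(u′(r)²/2 − λ)² − f(r)u(r) ] r^{n−1} dr = −(1/2)∫_{R₂}^{R₁} [ F(r)²r²/ζ(r) + 2λζ(r) + ζ(r)²/ν ] r^{n−1} dr; that is, the total potential energy I[u]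 equals the pure complementary energy I_d[ζ] (no duality gap). -/
/-- No duality gap: with `F(r) = -G(r)/rⁿ`, `G(R₁) = 0`, a continuous
nonvanishing solution `ζ` of the dual algebraic equation `2ζ(r)²(λ + ζ(r)/ν) = F(r)²r²`,
and `u(r) = C + ∫_{R₂}^{r} F(ρ)ρ/ζ(ρ) dρ`, the (radial) total potential energy `I[u]`
equals the pure complementary energy `I_d[ζ]`. -/
theorem stmt_12 (n : ℕ) (hn : 1 ≤ n) (R₁ R₂ : ℝ) (hR₂ : 0 < R₂) (hR : R₂ < R₁)
    (lam nu : ℝ) (hlam : 0 < lam) (hnu : 0 < nu)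
    (f : ℝ → ℝ) (hf : ContinuousOn f (Set.Icc R₂ R₁))
    (G : ℝ → ℝ) (hG : ∀ r, G r = ∫ ρ in R₂..r, f ρ * ρ ^ (n - 1))
    (hG₁ : G R₁ = 0)
    (F : ℝ → ℝ) (hF : ∀ r, F r = -G r / r ^ n)
    (ζ : ℝ → ℝ) (hζc : ContinuousOn ζ (Set.Icc R₂ R₁))
    (hζ0 : ∀ r ∈ Set.Icc R₂ R₁, ζ r ≠ 0)
    (hdae : ∀ r ∈ Set.Icc R₂ R₁, 2 * ζ r ^ 2 * (lam + ζ r / nu) = F r ^ 2 * r ^ 2)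
    (C : ℝ) (u : ℝ → ℝ)
    (hu : ∀ r, u r = C + ∫ ρ in R₂..r, F ρ * ρ / ζ ρ) :
    (∫ r in R₂..R₁,
        ((nu / 2) * ((deriv u r) ^ 2 / 2 - lam) ^ 2 - f r * u r) * r ^ (n - 1)) =
      -(1 / 2) * ∫ r in R₂..R₁,
        (F r ^ 2 * r ^ 2 / ζ r + 2 * lam * ζ r + ζ r ^ 2 / nu) * r ^ (n - 1) := by
  have key : ∀ g : ℝ → ℝ, ContinuousOn g (Set.Icc R₂ R₁) →
      ContinuousOn (fun r => ∫ ρ in R₂..r, g ρ) (Set.Icc R₂ R₁) ∧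
      ∀ r ∈ Set.Ioo R₂ R₁, HasDerivAt (fun r => ∫ ρ in R₂..r, g ρ) (g r) r := by
    intro g hg
    constructor
    · have := intervalIntegral.continuousOn_primitive_interval (μ := MeasureTheory.volume)
        (f := g) (a := R₂) (b := R₁)
        (by rw [Set.uIcc_of_le hR.le]; exact hg.integrableOn_Icc)
      rwa [Set.uIcc_of_le hR.le] at this
    · intro r hr
      have hn : Set.Icc R₂ R₁ ∈ nhds r := Icc_mem_nhds hr.1 hr.2
      apply intervalIntegral.integral_hasDerivAt_right
      · apply ContinuousOn.intervalIntegrable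
        rw [Set.uIcc_of_le hr.1.le]
        exact hg.mono (Set.Icc_subset_Icc_right hr.2.le)
      · exact ⟨Set.Icc R₂ R₁, hn, hg.aestronglyMeasurable measurableSet_Icc⟩
      · exact hg.continuousAt hn
  have hpos : ∀ r ∈ Set.Icc R₂ R₁, 0 < r := fun r hr => lt_of_lt_of_le hR₂ hr.1
  have hfc : ContinuousOn (fun ρ => f ρ * ρ ^ (n - 1)) (Set.Icc R₂ R₁) := by fun_prop
  obtain ⟨hGc, hGd⟩ := key _ hfc
  rw [← funext hG] at hGc hGd
  have hFc : ContinuousOn F (Set.Icc R₂ R₁) := by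
    rw [funext hF]
    exact hGc.neg.div (by fun_prop) (fun r hr => (pow_pos (hpos r hr) n).ne')
  have hwc : ContinuousOn (fun ρ => F ρ * ρ / ζ ρ) (Set.Icc R₂ R₁) :=
    (hFc.mul continuousOn_id).div hζc hζ0
  obtain ⟨hUc, hUd⟩ := key _ hwc
  have huc : ContinuousOn u (Set.Icc R₂ R₁) := by
    rw [funext hu]
    exact continuousOn_const.add hUc
  have hud : ∀ r ∈ Set.Ioo R₂ R₁, HasDerivAt u (F r * r / ζ r) r := by
    intro r hr
    rw [funext hu]
    exact (hUd r hr).const_add C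
  have hdc : ContinuousOn (fun r => f r * r ^ (n - 1) * u r + G r * (F r * r / ζ r))
      (Set.Icc R₂ R₁) := (hfc.mul huc).add (hGc.mul hwc)
  have hdi : IntervalIntegrable (fun r => f r * r ^ (n - 1) * u r + G r * (F r * r / ζ r))
      MeasureTheory.volume R₂ R₁ := by
    apply ContinuousOn.intervalIntegrable
    rwa [Set.uIcc_of_le hR.le]
  have hftc := intervalIntegral.integral_eq_sub_of_hasDerivAt_of_le hR.le (hGc.mul huc)
    (fun r hr => (hGd r hr).mul (hud r hr)) hdi
  have hG2 : G R₂ = 0 := by rw [hG]; simp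
  simp only [Pi.mul_apply, hG₁, hG2, zero_mul, sub_zero] at hftc
  have hbi : IntervalIntegrable (fun r => -(1 / 2) *
      ((F r ^ 2 * r ^ 2 / ζ r + 2 * lam * ζ r + ζ r ^ 2 / nu) * r ^ (n - 1)))
      MeasureTheory.volume R₂ R₁ := by
    apply ContinuousOn.intervalIntegrable
    rw [Set.uIcc_of_le hR.le]
    have h1 : ContinuousOn (fun r => F r ^ 2 * r ^ 2 / ζ r) (Set.Icc R₂ R₁) :=
      ContinuousOn.div (by fun_prop) hζc hζ0
    fun_prop
  rw [← intervalIntegral.integral_const_mul]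
  rw [← sub_zero (∫ r in R₂..R₁, -(1 / 2) *
      ((F r ^ 2 * r ^ 2 / ζ r + 2 * lam * ζ r + ζ r ^ 2 / nu) * r ^ (n - 1))), ← hftc,
    ← intervalIntegral.integral_sub hbi hdi]
  rw [intervalIntegral.integral_of_le hR.le, intervalIntegral.integral_of_le hR.le,
    MeasureTheory.integral_Ioc_eq_integral_Ioo, MeasureTheory.integral_Ioc_eq_integral_Ioo]
  apply MeasureTheory.setIntegral_congr_fun measurableSet_Ioo
  intro r hr
  have hr' := Set.Ioo_subset_Icc_self hr
  have hz := hζ0 r hr'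
  have hr0 := (hpos r hr').ne'
  have hd := hdae r hr'
  have hGF : G r = -(F r * (r ^ (n - 1) * r)) := by
    rw [← pow_succ, Nat.sub_add_cancel hn, hF]
    field_simp
  have e1 : (F r * r / ζ r) ^ 2 = 2 * (lam + ζ r / nu) := by
    rw [div_pow, mul_pow, ← hd]; field_simp
  have e2 : F r ^ 2 * r ^ 2 / ζ r = 2 * ζ r * (lam + ζ r / nu) := by
    rw [← hd]; field_simp
  have e3 : G r * (F r * r / ζ r) = -(F r ^ 2 * r ^ 2 / ζ r) * r ^ (n - 1) := by
    rw [hGF]; ring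
  simp only []
  rw [(hud r hr).deriv, e1, e3, e2]
  field_simp
  ring
end

section
/- Let n ≥ 1, 0 < R₂ < R₁, λ, ν > 0, and let f : [R₂, R₁] → ℝ be continuous. Define F(r) = −(1/rⁿ)·∫_{R₂}^{r} f(ρ)ρ^{n−1} dρ. Let ζ : [R₂, R₁] → ℝ be continuous with ζ(r) ≠ 0 and 2ζ(r)²(λ + ζ(r)/ν) = F(r)²r² for all r ∈ [R₂, R₁], and define v(r) = C + ∫_{R₂}^{r} F(ρ)ρ/ζ(ρ) dρ and u(x) = v(|x|) on the closed annulus {R₂ ≤ |x| ≤ R₁} ⊂ ℝⁿ. Then for every x with R₂ < |x| < R₁: (i) u is differentiable at x with ∇u(x) = (F(|x|)/ζ(|x|))·x; (ii) ν(|∇u(x)|²/2 − λ)·∇u(x) = F(|x|)·x; and (iii) the vector field x ↦ ν(|∇u(x)|²/2 − λ)∇u(x) is differentiable at x with divergence equal to −f(|x|), i.e. u solves the Euler–Lagrange equation div(∇H(∇u)) + f = 0 in the open annulus, where H(γ) = (ν/2)(|γ|²/2 − λ)². -/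
theorem aux_ftc (g : ℝ → ℝ) (a b : ℝ) (hg : ContinuousOn g (Set.Icc a b)) (r : ℝ)
    (h1 : a < r) (h2 : r < b) : HasDerivAt (fun s => ∫ ρ in a..s, g ρ) (g r) r := by
  have hn : Set.Icc a b ∈ nhds r := Icc_mem_nhds h1 h2
  apply intervalIntegral.integral_hasDerivAt_right
  · apply ContinuousOn.intervalIntegrable
    rw [Set.uIcc_of_le h1.le]
    exact hg.mono (Set.Icc_subset_Icc le_rfl h2.le)
  · exact ⟨Set.Icc a b, hn, hg.aestronglyMeasurable measurableSet_Icc⟩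
  · exact hg.continuousAt hn

theorem aux_norm {E : Type*} [NormedAddCommGroup E] [InnerProductSpace ℝ E] (x : E)
    (hx : 0 < ‖x‖) : HasFDerivAt (fun y : E => ‖y‖) (‖x‖⁻¹ • innerSL ℝ x) x := by
  have h := (hasStrictFDerivAt_norm_sq x).hasFDerivAt
  have h2 := h.sqrt (by positivity)
  have e : (fun y : E => √(‖y‖ ^ 2)) = fun y => ‖y‖ := by
    funext y; exact Real.sqrt_sq (norm_nonneg y)
  rw [e] at h2
  convert h2 using 1
  rw [Real.sqrt_sq hx.le]
  ext y
  simp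
  field_simp

theorem aux_main (n : ℕ) (hn : 1 ≤ n) (R₁ R₂ : ℝ) (hR₂ : 0 < R₂)
    (f : ℝ → ℝ) (hf : ContinuousOn f (Set.Icc R₂ R₁)) (F : ℝ → ℝ)
    (hF : ∀ r, F r = -(1 / r ^ n) * ∫ ρ in R₂..r, f ρ * ρ ^ (n - 1)) (r : ℝ)
    (h1 : R₂ < r) (h2 : r < R₁) : HasDerivAt F (-(n * F r + f r) / r) r := by
  have hr : r ≠ 0 := by linarith
  have hI := aux_ftc (fun ρ => f ρ * ρ ^ (n - 1)) R₂ R₁ (by fun_prop) r h1 h2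
  have hp := ((hasDerivAt_pow n r).inv (pow_ne_zero n hr)).neg.mul hI
  have e : F = (-(fun x : ℝ => x ^ n)⁻¹ * fun s => ∫ ρ in R₂..s, f ρ * ρ ^ (n - 1)) := by
    funext s; rw [hF s]; simp
  rw [← e] at hp
  refine hp.congr_deriv ?_
  rw [hF r]
  obtain ⟨m, rfl⟩ : ∃ m, n = m + 1 := ⟨n - 1, by omega⟩
  simp only [Pi.neg_apply, Pi.inv_apply, Nat.add_sub_cancel]
  generalize (∫ ρ in R₂..r, f ρ * ρ ^ m) = J
  push_cast
  field_simp
  ring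

/-- With `F(r) = -(1/rⁿ)·∫_{R₂}^{r} f(ρ)ρ^{n-1} dρ`, a continuous
nonvanishing root branch `ζ` of the dual algebraic equation
`2ζ(r)²(λ + ζ(r)/ν) = F(r)²r²`, `v(r) = C + ∫_{R₂}^{r} F(ρ)ρ/ζ(ρ) dρ` and
`u(x) = v(|x|)` on the closed annulus, for every `x` with `R₂ < |x| < R₁`:
(i) `u` is differentiable at `x` with gradient `(F(|x|)/ζ(|x|))·x`;
(ii) `ν(|∇u(x)|²/2 - λ)·∇u(x) = F(|x|)·x`;
(iii) the stress field `x ↦ ν(|∇u(x)|²/2 - λ)∇u(x)` is differentiable at `x`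
with divergence (trace of the Fréchet derivative) equal to `-f(|x|)`, i.e. `u`
solves `div(∇H(∇u)) + f = 0` for `H(γ) = (ν/2)(|γ|²/2 - λ)²`. -/
theorem stmt_17 (n : ℕ) (hn : 1 ≤ n) (R₁ R₂ : ℝ) (hR₂ : 0 < R₂) (hR : R₂ < R₁)
    (lam nu : ℝ) (hlam : 0 < lam) (hnu : 0 < nu)
    (f : ℝ → ℝ) (hf : ContinuousOn f (Set.Icc R₂ R₁))
    (F : ℝ → ℝ)
    (hF : ∀ r, F r = -(1 / r ^ n) * ∫ ρ in R₂..r, f ρ * ρ ^ (n - 1))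
    (ζ : ℝ → ℝ) (hζc : ContinuousOn ζ (Set.Icc R₂ R₁))
    (hζ0 : ∀ r ∈ Set.Icc R₂ R₁, ζ r ≠ 0)
    (hdae : ∀ r ∈ Set.Icc R₂ R₁, 2 * ζ r ^ 2 * (lam + ζ r / nu) = F r ^ 2 * r ^ 2)
    (C : ℝ) (v : ℝ → ℝ)
    (hv : ∀ r, v r = C + ∫ ρ in R₂..r, F ρ * ρ / ζ ρ)
    (u : EuclideanSpace ℝ (Fin n) → ℝ)
    (hu : ∀ x : EuclideanSpace ℝ (Fin n), R₂ ≤ ‖x‖ → ‖x‖ ≤ R₁ → u x = v ‖x‖) :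
    ∀ x : EuclideanSpace ℝ (Fin n), R₂ < ‖x‖ → ‖x‖ < R₁ →
      DifferentiableAt ℝ u x ∧
      gradient u x = (F ‖x‖ / ζ ‖x‖) • x ∧
      (nu * (‖gradient u x‖ ^ 2 / 2 - lam)) • gradient u x = F ‖x‖ • x ∧
      DifferentiableAt ℝ
        (fun y => (nu * (‖gradient u y‖ ^ 2 / 2 - lam)) • gradient u y) x ∧
      LinearMap.trace ℝ (EuclideanSpace ℝ (Fin n))
        (fderiv ℝ (fun y => (nu * (‖gradient u y‖ ^ 2 / 2 - lam)) • gradient u y)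
          x).toLinearMap = -f ‖x‖ := by
  
  have hFc : ContinuousOn F (Set.Icc R₂ R₁) := by
    have hg : ContinuousOn (fun ρ => f ρ * ρ ^ (n - 1)) (Set.Icc R₂ R₁) := by fun_prop
    have hI : ContinuousOn (fun r => ∫ ρ in R₂..r, f ρ * ρ ^ (n - 1)) (Set.Icc R₂ R₁) := by
      have := intervalIntegral.continuousOn_primitive_interval (μ := MeasureTheory.volume)
        (f := fun ρ => f ρ * ρ ^ (n - 1)) (a := R₂) (b := R₁)
        (by rw [Set.uIcc_of_le hR.le]; exact hg.integrableOn_Icc)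
      rwa [Set.uIcc_of_le hR.le] at this
    have e : F = fun r => -(1 / r ^ n) * ∫ ρ in R₂..r, f ρ * ρ ^ (n - 1) := funext hF
    rw [e]
    refine ContinuousOn.mul (ContinuousOn.neg (ContinuousOn.div₀ continuousOn_const
      (by fun_prop) ?_)) hI
    intro r hr
    exact pow_ne_zero n (by linarith [hr.1])
  have key : ∀ x : EuclideanSpace ℝ (Fin n), R₂ < ‖x‖ → ‖x‖ < R₁ →
      HasGradientAt u ((F ‖x‖ / ζ ‖x‖) • x) x := by
    intro x h1 h2
    have hx : 0 < ‖x‖ := hR₂.trans h1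
    have hI := (aux_ftc (fun ρ => F ρ * ρ / ζ ρ) R₂ R₁
      ((hFc.mul continuousOn_id).div₀ hζc hζ0) ‖x‖ h1 h2).const_add C
    have e : v = fun s => C + ∫ ρ in R₂..s, F ρ * ρ / ζ ρ := funext hv
    rw [← e] at hI
    have hc := hI.comp_hasFDerivAt x (aux_norm x hx)
    rw [hasGradientAt_iff_hasFDerivAt]
    refine (hc.congr_of_eventuallyEq ?_).congr_fderiv ?_
    · have : Set.Ioo R₂ R₁ ∈ nhds ‖x‖ := Ioo_mem_nhds h1 h2
      filter_upwards [continuous_norm.continuousAt.preimage_mem_nhds this] with y hy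
      exact hu y hy.1.le hy.2.le
    · ext y
      have := hζ0 ‖x‖ ⟨h1.le, h2.le⟩
      simp [inner_smul_left]
      field_simp
  have stress : ∀ x : EuclideanSpace ℝ (Fin n), R₂ < ‖x‖ → ‖x‖ < R₁ →
      (nu * (‖gradient u x‖ ^ 2 / 2 - lam)) • gradient u x = F ‖x‖ • x := by
    intro x h1 h2
    have hz := hζ0 ‖x‖ ⟨h1.le, h2.le⟩
    have hd := hdae ‖x‖ ⟨h1.le, h2.le⟩
    rw [(key x h1 h2).gradient, smul_smul]
    congr 1
    rw [norm_smul, mul_pow, Real.norm_eq_abs, sq_abs]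
    have : (F ‖x‖ / ζ ‖x‖) ^ 2 * ‖x‖ ^ 2 = 2 * (lam + ζ ‖x‖ / nu) := by
      rw [div_pow, div_mul_eq_mul_div, ← hd]
      field_simp
    rw [this]
    field_simp
    ring
  intro x h1 h2
  have hx : 0 < ‖x‖ := hR₂.trans h1
  have hFd := (aux_main n hn R₁ R₂ hR₂ f hf F hF ‖x‖ h1 h2).comp_hasFDerivAt x (aux_norm x hx)
  have hS := hFd.smul (hasFDerivAt_id x)
  have hS' := hS.congr_of_eventuallyEq
    (f₁ := fun y => (nu * (‖gradient u y‖ ^ 2 / 2 - lam)) • gradient u y) (by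
      have : Set.Ioo R₂ R₁ ∈ nhds ‖x‖ := Ioo_mem_nhds h1 h2
      filter_upwards [continuous_norm.continuousAt.preimage_mem_nhds this] with y hy
      exact stress y hy.1 hy.2)
  refine ⟨(key x h1 h2).differentiableAt, (key x h1 h2).gradient, stress x h1 h2,
    hS'.differentiableAt, ?_⟩
  rw [hS'.fderiv]
  have e : ∀ (a : ℝ) (L : EuclideanSpace ℝ (Fin n) →L[ℝ] ℝ),
      LinearMap.trace ℝ (EuclideanSpace ℝ (Fin n))
      (a • ContinuousLinearMap.id ℝ (EuclideanSpace ℝ (Fin n)) + L.smulRight x).toLinearMap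
      = a * n + L x := by
    intro a L
    have : (a • ContinuousLinearMap.id ℝ (EuclideanSpace ℝ (Fin n)) + L.smulRight x).toLinearMap
      = a • LinearMap.id + (L.toLinearMap).smulRight x := rfl
    rw [this, map_add, map_smul, LinearMap.trace_id, LinearMap.trace_smulRight]
    simp
  refine (e _ _).trans ?_
  simp
  field_simp
  ring
end

section
/- Let n ≥ 1, 0 < R₂ < R₁, λ, ν > 0, f : [R₂, R₁] → ℝ continuous, F(r) = −(1/rⁿ)·∫_{R₂}^{r} f(ρ)ρ^{n−1} dρ, and let ζ : [R₂, R₁] → ℝ be continuous with ζ(r) ≠ 0 and 2ζ(r)²(λ + ζ(r)/ν) = F(r)²r² for all r. Define u(r) = C + ∫_{R₂}^{r} F(ρ)ρ/ζ(ρ) dρ. Then for every r ∈ (R₂, R₁), the function r ↦ r^{n−1}·ν(u′(r)²/2 − λ)·u′(r) equals −G(r) where G(r) = ∫_{R₂}^{r} f(ρ)ρ^{n−1} dρ, and hence it is differentiable with d/dr [ r^{n−1}·ν(u′(r)²/2 − λ)u′(r) ] + f(r)r^{n−1} = 0; i.e., u solves the radial Euler–Lagrange equation of the functional I. -/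
theorem ftc_aux (g : ℝ → ℝ) (a b : ℝ) (hg : ContinuousOn g (Set.Icc a b)) (r : ℝ)
    (hr : r ∈ Set.Ioo a b) : HasDerivAt (fun x => ∫ t in a..x, g t) (g r) r := by
  have hnhds : Set.Icc a b ∈ nhds r := Icc_mem_nhds hr.1 hr.2
  apply intervalIntegral.integral_hasDerivAt_right
  · apply ContinuousOn.intervalIntegrable
    rw [Set.uIcc_of_le hr.1.le]
    exact hg.mono (Set.Icc_subset_Icc_right hr.2.le)
  · exact ⟨Set.Icc a b, hnhds, hg.aestronglyMeasurable measurableSet_Icc⟩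
  · exact hg.continuousAt hnhds

/-- With `F(r) = -(1/rⁿ)·∫_{R₂}^{r} f(ρ)ρ^{n-1} dρ`, a continuous
nonvanishing root branch `ζ` of the dual algebraic equation and
`u(r) = C + ∫_{R₂}^{r} F(ρ)ρ/ζ(ρ) dρ`, the radial stress
`r^{n-1}·ν(u′(r)²/2 - λ)·u′(r)` equals `-G(r)` on `(R₂, R₁)` and satisfies
`d/dr[r^{n-1}·ν(u′(r)²/2 - λ)u′(r)] + f(r)r^{n-1} = 0`, i.e. `u` solves the
radial Euler–Lagrange equation. -/
theorem stmt_19 (n : ℕ) (hn : 1 ≤ n) (R₁ R₂ : ℝ) (hR₂ : 0 < R₂) (hR : R₂ < R₁)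
    (lam nu : ℝ) (hlam : 0 < lam) (hnu : 0 < nu)
    (f : ℝ → ℝ) (hf : ContinuousOn f (Set.Icc R₂ R₁))
    (F : ℝ → ℝ)
    (hF : ∀ r, F r = -(1 / r ^ n) * ∫ ρ in R₂..r, f ρ * ρ ^ (n - 1))
    (ζ : ℝ → ℝ) (hζc : ContinuousOn ζ (Set.Icc R₂ R₁))
    (hζ0 : ∀ r ∈ Set.Icc R₂ R₁, ζ r ≠ 0)
    (hdae : ∀ r ∈ Set.Icc R₂ R₁, 2 * ζ r ^ 2 * (lam + ζ r / nu) = F r ^ 2 * r ^ 2)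
    (C : ℝ) (u : ℝ → ℝ)
    (hu : ∀ r, u r = C + ∫ ρ in R₂..r, F ρ * ρ / ζ ρ)
    (G : ℝ → ℝ) (hG : ∀ r, G r = ∫ ρ in R₂..r, f ρ * ρ ^ (n - 1)) :
    ∀ r ∈ Set.Ioo R₂ R₁,
      r ^ (n - 1) * (nu * ((deriv u r) ^ 2 / 2 - lam) * deriv u r) = -G r ∧
      HasDerivAt (fun s => s ^ (n - 1) * (nu * ((deriv u s) ^ 2 / 2 - lam) * deriv u s))
        (-(f r * r ^ (n - 1))) r := by
  have hg : ContinuousOn (fun ρ => f ρ * ρ ^ (n - 1)) (Set.Icc R₂ R₁) :=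
    hf.mul (continuous_pow _).continuousOn
  have hpos : ∀ r ∈ Set.Icc R₂ R₁, r ≠ 0 := fun r hr => (lt_of_lt_of_le hR₂ hr.1).ne'
  have hFc : ContinuousOn F (Set.Icc R₂ R₁) := by
    have hI : ContinuousOn (fun r => ∫ ρ in R₂..r, f ρ * ρ ^ (n - 1)) (Set.Icc R₂ R₁) := by
      rw [← Set.uIcc_of_le hR.le]
      apply intervalIntegral.continuousOn_primitive_interval
      rw [Set.uIcc_of_le hR.le]
      exact hg.integrableOn_Icc
    have h1 : ContinuousOn (fun r : ℝ => -(1 / r ^ n)) (Set.Icc R₂ R₁) :=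
      (continuousOn_const.div (continuous_pow n).continuousOn
        (fun r hr => pow_ne_zero n (hpos r hr))).neg
    exact (h1.mul hI).congr (fun r _ => hF r)
  have hq : ContinuousOn (fun ρ => F ρ * ρ / ζ ρ) (Set.Icc R₂ R₁) :=
    (hFc.mul continuousOn_id).div hζc hζ0
  have hdu : ∀ r ∈ Set.Ioo R₂ R₁, deriv u r = F r * r / ζ r := by
    intro r hr
    have hueq : u = fun r => C + ∫ ρ in R₂..r, F ρ * ρ / ζ ρ := funext hu
    rw [hueq]
    exact ((ftc_aux _ R₂ R₁ hq r hr).const_add C).deriv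
  have key : ∀ r ∈ Set.Ioo R₂ R₁,
      r ^ (n - 1) * (nu * ((deriv u r) ^ 2 / 2 - lam) * deriv u r) = -G r := by
    intro r hr
    have hr' := Set.Ioo_subset_Icc_self hr
    have hz := hζ0 r hr'
    have hr0 := hpos r hr'
    have h1 : nu * ((F r * r / ζ r) ^ 2 / 2 - lam) = ζ r := by
      have h2 : (F r * r / ζ r) ^ 2 = 2 * (lam + ζ r / nu) := by
        rw [div_pow, mul_pow, ← hdae r hr']
        field_simp
      rw [h2]
      field_simp
      ring
    have h3 : r ^ n = r ^ (n - 1) * r := by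
      rw [← pow_succ, Nat.sub_add_cancel hn]
    have h4 : F r * r ^ n = -G r := by
      rw [hF r, hG r]
      field_simp
    rw [hdu r hr, h1, mul_div_cancel₀ _ hz, ← h4, h3]
    ring
  intro r hr
  refine ⟨key r hr, ?_⟩
  have hGd : HasDerivAt (fun s => -G s) (-(f r * r ^ (n - 1))) r := by
    have hGeq : G = fun r => ∫ ρ in R₂..r, f ρ * ρ ^ (n - 1) := funext hG
    rw [hGeq]
    exact (ftc_aux _ R₂ R₁ hg r hr).neg
  apply hGd.congr_of_eventuallyEq
  filter_upwards [Ioo_mem_nhds hr.1 hr.2] with s hs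
  exact key s hs
end
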